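/- For any constants ε, α, λ > 0 there exist a constant κ > 0 and n₀ such that for all n ≥ n₀, every connected d-regular graph G with n vertices and d ≥ ε·log n, every source vertex s, and every number of agents |A| ≤ α·n, the broadcast time of visit-exchange satisfies P[T_visitx(G,s) ≥ κ·log n] ≥ 1 − n^{−λ}. -/

import Mathlib

/-!
The number of informed vertices and agents grows at most geometrically, with overwhelming
probability. An agent that is still uninformed has been avoiding the informed vertices; on a
regular graph with `n` vertices its position has (unnormalised) density at most `1/n`, and as long
as the informed sets are small the avoidance has probability at least `1/2`. So, given everything
that the informed agents reveal, the uninformed agents are independent, and each of them sits in a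
set of `c` vertices with conditional probability at most `2c/n`. With `a ≤ α n` agents, if `q`
vertices and agents are informed, then after one round the exponential moment with parameter
`x ≤ 1` of the new number of informed vertices and agents is at most `exp ((2 + 4α) x q)`.

`hitP` expresses the probability of informing everything as a backward recursion, and `vxProb_eq`
identifies it with the probability in the statement. `sum_le_cells` splits a round according to the
positions of the informed agents and the set of agents that become informed, which keeps the
agents' weights in product form. `main_bound` iterates the exponential-moment estimate, with
parameter `x₀ C ^ r` when `r` steps remain, `C = 2 + 4α`; it becomes trivial once `B` vertices and
agents are informed. With `x₀ = C ^ (-k)` and `B = n / (2 (k + 1))` this gives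
`P[T ≤ k] ≤ exp (1 - n / (2 C ^ (2k)))`, and for `k ≤ log n / (4 log C)` the right-hand side is at
most `exp (1 - √n / 2)`, which is below every fixed power of `n` for large `n`.
-/

open Finset
open scoped Classical ENNReal

noncomputable section

namespace Rumor

variable {V : Type*} {A : Type*}

/-- Probability weight of `u` as a uniformly random neighbor of `v` in `G`
(`1/deg v` if `u` is a neighbor of `v`, and `0` otherwise). -/
def nbrW [Fintype V] (G : SimpleGraph V) (v u : V) : ℝ :=
  if G.Adj v u then 1 / (G.degree v : ℝ) else 0

/-- Probability weight of a lazy simple random walk step from `v` to `u`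
(stay put with probability `1/2`, otherwise move to a uniform neighbor). -/
def lazyW [Fintype V] (G : SimpleGraph V) (v u : V) : ℝ :=
  if u = v then 1 / 2 else if G.Adj v u then 1 / (2 * (G.degree v : ℝ)) else 0

/-- Stationary distribution of the simple random walk on `G`:
vertex `v` has probability `deg v / (2 |E|)`. -/
def statW [Fintype V] (G : SimpleGraph V) (v : V) : ℝ :=
  (G.degree v : ℝ) / ∑ u : V, (G.degree u : ℝ)

/-- Informed vertices of the PUSH protocol with source `s` after `t` rounds,
when in round `t+1` each vertex `u` sends the rumor to the vertex `σ t u`. -/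
def pushInf (s : V) (σ : ℕ → V → V) : ℕ → Set V
  | 0 => {s}
  | t + 1 => pushInf s σ t ∪ (σ t) '' pushInf s σ t

/-- Informed vertices of the PUSH-PULL protocol with source `s` after `t` rounds,
when in round `t+1` each vertex `u` contacts the vertex `σ t u`. -/
def ppullInf (s : V) (σ : ℕ → V → V) : ℕ → Set V
  | 0 => {s}
  | t + 1 => ppullInf s σ t ∪ (σ t) '' ppullInf s σ t ∪ {v | σ t v ∈ ppullInf s σ t}

/-- Extend finite-horizon driving noise to all times (by the identity). -/
def extV {k : ℕ} (σ : Fin k → V → V) : ℕ → V → V :=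
  fun t => if h : t < k then σ ⟨t, h⟩ else id

/-- `P[T_push(G,s) ≤ k]`: the probability that all vertices are informed within `k`
rounds of the PUSH protocol on `G` with source `s`, where in each round every vertex
samples an independent uniformly random neighbor. -/
def pushProbLe [Fintype V] (G : SimpleGraph V) (s : V) (k : ℕ) : ℝ :=
  ∑ σ : Fin k → V → V,
    if pushInf s (extV σ) k = Set.univ then ∏ t : Fin k, ∏ v : V, nbrW G v (σ t v) else 0

/-- `P[T_ppull(G,s) ≤ k]` for the PUSH-PULL protocol. -/
def ppullProbLe [Fintype V] (G : SimpleGraph V) (s : V) (k : ℕ) : ℝ :=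
  ∑ σ : Fin k → V → V,
    if ppullInf s (extV σ) k = Set.univ then ∏ t : Fin k, ∏ v : V, nbrW G v (σ t v) else 0

/-- Position after `t` steps of the walk of agent `g`, started at `x0 g`, where at
round `t+1` the agent moves from its current position `v` to `σ t g v`. -/
def walk (x0 : A → V) (σ : ℕ → A → V → V) (g : A) : ℕ → V
  | 0 => x0 g
  | t + 1 => σ t g (walk x0 σ g t)

/-- Extend finite-horizon driving noise for the agents to all times. -/
def extAV {k : ℕ} (σ : Fin k → A → V → V) : ℕ → A → V → V :=
  fun t => if h : t < k then σ ⟨t, h⟩ else fun _ => id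

/-- Probability of the event `E` on the trajectories (up to time `k`) of independent
simple random walks on `G`, one for each agent in `A`, each started from an independent
sample of the stationary distribution. -/
def walksProb [Fintype V] [Fintype A] (G : SimpleGraph V) (k : ℕ)
    (E : (A → ℕ → V) → Prop) : ℝ :=
  ∑ x0 : A → V, ∑ σ : Fin k → A → V → V,
    if E (walk x0 (extAV σ)) then
      (∏ g : A, statW G (x0 g)) * ∏ t : Fin k, ∏ g : A, ∏ v : V, nbrW G v (σ t g v)
    else 0

/-- Probability of the event `E` on the trajectories (up to time `k`) of independent
*lazy* simple random walks on `G`, one for each agent in `A`, each started from an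
independent sample of the stationary distribution. -/
def walksLazyProb [Fintype V] [Fintype A] (G : SimpleGraph V) (k : ℕ)
    (E : (A → ℕ → V) → Prop) : ℝ :=
  ∑ x0 : A → V, ∑ σ : Fin k → A → V → V,
    if E (walk x0 (extAV σ)) then
      (∏ g : A, statW G (x0 g)) * ∏ t : Fin k, ∏ g : A, ∏ v : V, lazyW G v (σ t g v)
    else 0

/-- The pair (informed vertices, informed agents) of VISIT-EXCHANGE with source `s`
after `t` rounds, given agent trajectories `x`. -/
def vxInf (s : V) (x : A → ℕ → V) : ℕ → Set V × Set A
  | 0 => ({s}, {g | x g 0 = s})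
  | t + 1 =>
      let p := vxInf s x t
      (p.1 ∪ {v | ∃ g ∈ p.2, x g (t + 1) = v},
       p.2 ∪ {g | x g (t + 1) ∈ p.1 ∪ {v | ∃ g' ∈ p.2, x g' (t + 1) = v}})

/-- `P[T_visitx(G,s) ≤ k]`: probability that all vertices are informed within `k` rounds
of VISIT-EXCHANGE on `G` with source `s` and `a` agents. -/
def vxProbLe [Fintype V] (G : SimpleGraph V) (s : V) (a k : ℕ) : ℝ :=
  walksProb (A := Fin a) G k fun x => (vxInf s x k).1 = Set.univ

/-- The pair (informed agents, "the source has already informed some agent") of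
MEET-EXCHANGE with source `s` after `t` rounds, given agent trajectories `x`. -/
def mxInf (s : V) (x : A → ℕ → V) : ℕ → Set A × Prop
  | 0 => ({g | x g 0 = s}, ∃ g, x g 0 = s)
  | t + 1 =>
      let p := mxInf s x t
      (p.1 ∪ {g | ∃ g' ∈ p.1, x g' (t + 1) = x g (t + 1)} ∪ {g | ¬p.2 ∧ x g (t + 1) = s},
       p.2 ∨ ∃ g, x g (t + 1) = s)

/-- `P[T_meetx(G,s) ≤ k]`: probability that all agents are informed within `k` rounds of
MEET-EXCHANGE on `G` with source `s` and `a` agents (non-lazy walks). -/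
def mxProbLe [Fintype V] (G : SimpleGraph V) (s : V) (a k : ℕ) : ℝ :=
  walksProb (A := Fin a) G k fun x => (mxInf s x k).1 = Set.univ

/-- `P[T_meetx(G,s) ≤ k]` for MEET-EXCHANGE with lazy walks. -/
def mxLazyProbLe [Fintype V] (G : SimpleGraph V) (s : V) (a k : ℕ) : ℝ :=
  walksLazyProb (A := Fin a) G k fun x => (mxInf s x k).1 = Set.univ

/-- `E[T_push(G,s)] = ∑_{k≥0} P[T_push > k]`. -/
def pushET [Fintype V] (G : SimpleGraph V) (s : V) : ℝ≥0∞ :=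
  ∑' k : ℕ, ENNReal.ofReal (1 - pushProbLe G s k)

/-- `E[T_ppull(G,s)] = ∑_{k≥0} P[T_ppull > k]`. -/
def ppullET [Fintype V] (G : SimpleGraph V) (s : V) : ℝ≥0∞ :=
  ∑' k : ℕ, ENNReal.ofReal (1 - ppullProbLe G s k)

/-- `E[T_visitx(G,s)] = ∑_{k≥0} P[T_visitx > k]` with `a` agents. -/
def vxET [Fintype V] (G : SimpleGraph V) (s : V) (a : ℕ) : ℝ≥0∞ :=
  ∑' k : ℕ, ENNReal.ofReal (1 - vxProbLe G s a k)

/-- `E[T_meetx(G,s)] = ∑_{k≥0} P[T_meetx > k]` with `a` agents. -/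
def mxET [Fintype V] (G : SimpleGraph V) (s : V) (a : ℕ) : ℝ≥0∞ :=
  ∑' k : ℕ, ENNReal.ofReal (1 - mxProbLe G s a k)

end Rumor

set_option linter.unusedSectionVars false

namespace Rumor

variable {V : Type*} {A : Type*} [Fintype V] [Fintype A]

/-! ### The process as a Markov chain -/

/-- One round of VISIT-EXCHANGE: from informed vertices `p.1` and informed agents `p.2`, when the
agents have just moved to the positions `y`. The newly informed agents are listed as a subset of
`p.2ᶜ`, so that the union in the second component is disjoint. -/
def upd (p : Finset V × Finset A) (y : A → V) : Finset V × Finset A :=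
  (p.1 ∪ (univ : Finset p.2).image (fun g : p.2 => y g),
   p.2 ∪ p.2ᶜ.filter (fun g => y g ∈ p.1 ∪ (univ : Finset p.2).image (fun g : p.2 => y g)))

/-- The state after `t` rounds, started from an arbitrary state `p` to which the update with the
positions at time `0` is applied as well. -/
def vxF (p : Finset V × Finset A) (x : A → ℕ → V) : ℕ → Finset V × Finset A
  | 0 => upd p (fun g => x g 0)
  | t + 1 => upd (vxF p x t) (fun g => x g (t + 1))

/-- Treating time `0` as an update of the state with informed vertex `s` and no informed agent
reproduces `vxInf`. -/
lemma vxInf_eq (s : V) (x : A → ℕ → V) (t : ℕ) :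
    vxInf s x t = (((vxF ({s}, ∅) x t).1 : Set V), ((vxF ({s}, ∅) x t).2 : Set A)) := by
  induction t with
  | zero =>
    ext g
    · simp [vxInf, vxF, upd]
    · simp [vxInf, vxF, upd]
  | succ t ih =>
    have h1 : ∀ (p : Finset V × Finset A) (y : A → V),
        ((upd p y).1 : Set V) = (p.1 : Set V) ∪ {v | ∃ g ∈ (p.2 : Set A), y g = v} := by
      intro p y
      ext v
      simp [upd]
    have h2 : ∀ (p : Finset V × Finset A) (y : A → V),
        ((upd p y).2 : Set A) = (p.2 : Set A) ∪ {g | y g ∈ (upd p y).1} := by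
      intro p y
      ext g
      by_cases hg : g ∈ p.2 <;> simp [upd, hg]
    simp only [vxInf, vxF, ih]
    rw [h2, h1]
    congr 2
    ext g
    simp only [Set.mem_ofPred_eq, ← Finset.mem_coe, h1]

lemma vxF_succ (p : Finset V × Finset A) (x : A → ℕ → V) (t : ℕ) :
    vxF p x (t + 1) = vxF (upd p (fun g => x g 0)) (fun g u => x g (u + 1)) t := by
  induction t with
  | zero => rfl
  | succ t ih => rw [vxF, ih, vxF]

/-- The probability that all vertices are informed after `r` further steps, when the state before
the current update is `p` and the agents are currently at `y`. -/
def hitP (G : SimpleGraph V) : ℕ → Finset V × Finset A → (A → V) → ℝ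
  | 0, p, y => if (upd p y).1 = univ then 1 else 0
  | r + 1, p, y => ∑ y' : A → V, (∏ g, nbrW G (y g) (y' g)) * hitP G r (upd p y) y'

lemma nbrW_nonneg (G : SimpleGraph V) (v u : V) : 0 ≤ nbrW G v u := by
  unfold nbrW
  split_ifs <;> positivity

lemma sum_nbrW {G : SimpleGraph V} {d : ℕ} (hG : G.IsRegularOfDegree d) (hd : 0 < d) (v : V) :
    ∑ u, nbrW G v u = 1 := by
  have : (d : ℝ) ≠ 0 := by positivity
  simp only [nbrW, ← Finset.sum_filter, Finset.sum_const, nsmul_eq_mul]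
  rw [← G.neighborFinset_eq_filter, G.card_neighborFinset_eq_degree, hG.degree_eq]
  field_simp

lemma sum_nbrW_left {G : SimpleGraph V} {d : ℕ} (hG : G.IsRegularOfDegree d) (hd : 0 < d) (u : V) :
    ∑ v, nbrW G v u = 1 := by
  rw [← sum_nbrW hG hd u]
  refine Finset.sum_congr rfl fun v _ => ?_
  simp [nbrW, hG.degree_eq, G.adj_comm]

/-- Only the value of the random map `τ g` at the position `x g` matters, so the others integrate
out. -/
lemma sum_maps (w : V → V → ℝ) (hw : ∀ v, ∑ u, w v u = 1) (x : A → V) (f : (A → V) → ℝ) :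
    ∑ τ : A → V → V, (∏ g, ∏ v, w v (τ g v)) * f (fun g => τ g (x g))
      = ∑ y : A → V, (∏ g, w (x g) (y g)) * f y := by
  have h1 : ∀ (v₀ u : V), ∑ ρ : V → V, (if ρ v₀ = u then ∏ v, w v (ρ v) else 0) = w v₀ u := by
    intro v₀ u
    have : ∀ ρ : V → V, (if ρ v₀ = u then ∏ v, w v (ρ v) else 0)
        = ∏ v, (if v = v₀ then (if ρ v = u then w v (ρ v) else 0) else w v (ρ v)) := by
      intro ρ
      split_ifs with h
      · refine Finset.prod_congr rfl fun v _ => ?_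
        split_ifs with h1 h2
        · rfl
        · subst h1; exact absurd h h2
        · rfl
      · symm
        exact Finset.prod_eq_zero (Finset.mem_univ v₀) (by simp [h])
    simp_rw [this]
    rw [← Fintype.prod_sum
      (fun v u' => if v = v₀ then (if u' = u then w v u' else 0) else w v u'),
      ← Finset.mul_prod_erase _ _ (Finset.mem_univ v₀), Finset.prod_eq_one]
    · simp
    · intro v hv
      simp [Finset.ne_of_mem_erase hv, hw]
  have h2 : ∀ y : A → V, ∏ g, w (x g) (y g)
      = ∑ τ : A → V → V, (if (fun g => τ g (x g)) = y then ∏ g, ∏ v, w v (τ g v) else 0) := by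
    intro y
    rw [Finset.prod_congr rfl fun g _ => (h1 (x g) (y g)).symm, Fintype.prod_sum]
    refine Finset.sum_congr rfl fun τ _ => ?_
    split_ifs with h
    · refine Finset.prod_congr rfl fun g _ => ?_
      rw [if_pos (congrFun h g)]
    · obtain ⟨g, hg⟩ := Function.ne_iff.mp h
      exact Finset.prod_eq_zero (Finset.mem_univ g) (by simp [hg])
  simp_rw [h2, Finset.sum_mul]
  rw [Finset.sum_comm]
  refine Finset.sum_congr rfl fun τ _ => ?_
  simp [ite_mul]

lemma walk_cons {k : ℕ} (x0 : A → V) (τ : A → V → V) (σ : Fin k → A → V → V) (g : A) (t : ℕ) :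
    walk x0 (extAV (Fin.cons (α := fun _ => A → V → V) τ σ : Fin (k + 1) → A → V → V)) g (t + 1)
      = walk (fun g => τ g (x0 g)) (extAV σ) g t := by
  induction t with
  | zero => simp [walk, extAV]
  | succ t ih =>
    rw [walk, ih, walk]
    by_cases h : t < k
    · have h' : t + 1 < k + 1 := by omega
      simp only [extAV, h, h', dif_pos]
      rfl
    · have h' : ¬ t + 1 < k + 1 := by omega
      simp only [extAV, h, h', dif_neg, not_false_eq_true]

lemma hitP_eq {G : SimpleGraph V} (hw : ∀ v, ∑ u, nbrW G v u = 1) (k : ℕ)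
    (p : Finset V × Finset A) (x0 : A → V) :
    ∑ σ : Fin k → A → V → V, (if (vxF p (walk x0 (extAV σ)) k).1 = univ then
        ∏ t : Fin k, ∏ g : A, ∏ v : V, nbrW G v (σ t g v) else 0) = hitP G k p x0 := by
  induction k generalizing p x0 with
  | zero => simp [hitP, vxF, walk]
  | succ k ih =>
    rw [hitP, ← sum_maps _ hw x0 (fun y => hitP G k (upd p x0) y),
      ← (Fin.consEquiv (fun _ : Fin (k + 1) => A → V → V)).sum_comp, Fintype.sum_prod_type]
    refine Finset.sum_congr rfl fun τ _ => ?_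
    rw [← ih, Finset.mul_sum]
    refine Finset.sum_congr rfl fun σ _ => ?_
    have hc : (Fin.consEquiv fun _ : Fin (k + 1) => A → V → V) (τ, σ)
        = Fin.cons (α := fun _ => A → V → V) τ σ := rfl
    simp only [hc, vxF_succ, walk_cons, Fin.prod_univ_succ, Fin.cons_zero,
      Fin.cons_succ, mul_ite, mul_zero]
    rfl

lemma vxProb_eq {G : SimpleGraph V} (hw : ∀ v, ∑ u, nbrW G v u = 1) (s : V) (k : ℕ) :
    walksProb (A := A) G k (fun x => (vxInf s x k).1 = Set.univ)
      = ∑ y : A → V, (∏ g, statW G (y g)) * hitP G k ({s}, ∅) y := by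
  unfold walksProb
  refine Finset.sum_congr rfl fun y _ => ?_
  rw [← hitP_eq hw, Finset.mul_sum]
  refine Finset.sum_congr rfl fun σ _ => ?_
  simp only [vxInf_eq, Finset.coe_eq_univ, mul_ite, mul_zero]

lemma hitP_nonneg (G : SimpleGraph V) (r : ℕ) (p : Finset V × Finset A) (y : A → V) :
    0 ≤ hitP G r p y := by
  induction r generalizing p y with
  | zero => unfold hitP; split_ifs <;> norm_num
  | succ r ih =>
    exact Finset.sum_nonneg fun y' _ =>
      mul_nonneg (Finset.prod_nonneg fun g _ => nbrW_nonneg G _ _) (ih _ _)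

lemma hitP_le_one {G : SimpleGraph V} (hw : ∀ v, ∑ u, nbrW G v u = 1) (r : ℕ)
    (p : Finset V × Finset A) (y : A → V) : hitP G r p y ≤ 1 := by
  induction r generalizing p y with
  | zero => unfold hitP; split_ifs <;> norm_num
  | succ r ih =>
    calc hitP G (r + 1) p y ≤ ∑ y' : A → V, ∏ g, nbrW G (y g) (y' g) :=
          Finset.sum_le_sum fun y' _ => mul_le_of_le_one_right
            (Finset.prod_nonneg fun g _ => nbrW_nonneg G _ _) (ih _ _)
      _ = 1 := by rw [← Fintype.prod_sum (fun g u => nbrW G (y g) u)]; simp [hw]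

/-! ### Decomposition according to the revealed information -/

/-- The part of the weight `m` of agent `g` compatible with: informed agents (those in `S`) sit at
the positions `z`, and among the other agents exactly those in `U` sit in `J`. -/
def cell (m : A → V → ℝ) (S : Finset A) (J : Finset V) (z : S → V) (U : Finset A)
    (g : A) (v : V) : ℝ :=
  if h : g ∈ S then (if v = z ⟨g, h⟩ then m g v else 0)
  else if g ∈ U then (if v ∈ J then m g v else 0)
  else (if v ∈ J then 0 else m g v)

lemma cell_nonneg {m : A → V → ℝ} (hm : ∀ g v, 0 ≤ m g v) (S : Finset A) (J : Finset V)
    (z : S → V) (U : Finset A) (g : A) (v : V) : 0 ≤ cell m S J z U g v := by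
  have := hm g v
  unfold cell
  split_ifs <;> first | exact this | exact le_rfl

/-- The informed vertices after the update in which the informed agents `S` move to `z`. -/
def newJ (I : Finset V) (S : Finset A) (z : S → V) : Finset V :=
  I ∪ (univ : Finset S).image z

lemma card_newJ (I : Finset V) (S : Finset A) (z : S → V) :
    (newJ I S z).card ≤ I.card + S.card := by
  refine (Finset.card_union_le _ _).trans ?_
  have : ((univ : Finset S).image z).card ≤ S.card := by
    simpa using Finset.card_image_le (s := (univ : Finset S)) (f := z)
  omega

lemma sum_le_cells {m : A → V → ℝ} (hm : ∀ g v, 0 ≤ m g v) (I : Finset V) (S : Finset A)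
    (f : Finset V × Finset A → (A → V) → ℝ) (hf : ∀ p y, 0 ≤ f p y) :
    ∑ y : A → V, (∏ g, m g (y g)) * f (upd (I, S) y) y
      ≤ ∑ z : S → V, ∑ U ∈ Sᶜ.powerset, ∑ y : A → V,
          (∏ g, cell m S (newJ I S z) z U g (y g)) * f (newJ I S z, S ∪ U) y := by
  have key : ∀ y : A → V, (∏ g, m g (y g)) * f (upd (I, S) y) y
      ≤ ∑ z : S → V, ∑ U ∈ Sᶜ.powerset,
          (∏ g, cell m S (newJ I S z) z U g (y g)) * f (newJ I S z, S ∪ U) y := by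
    intro y
    have nn : ∀ (z : S → V) (U : Finset A),
        0 ≤ (∏ g, cell m S (newJ I S z) z U g (y g)) * f (newJ I S z, S ∪ U) y := fun z U =>
      mul_nonneg (Finset.prod_nonneg fun g _ => cell_nonneg hm _ _ _ _ _ _) (hf _ _)
    let z₀ : S → V := fun g => y g
    let U₀ : Finset A := Sᶜ.filter (fun g => y g ∈ newJ I S z₀)
    have hcell : ∀ g, cell m S (newJ I S z₀) z₀ U₀ g (y g) = m g (y g) := by
      intro g
      unfold cell
      by_cases h : g ∈ S
      · simp [h, z₀]
      · by_cases h' : y g ∈ newJ I S z₀ <;> simp [h, h', U₀]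
    have h0 : (∏ g, m g (y g)) * f (upd (I, S) y) y
        = (∏ g, cell m S (newJ I S z₀) z₀ U₀ g (y g)) * f (newJ I S z₀, S ∪ U₀) y := by
      have : upd (I, S) y = (newJ I S z₀, S ∪ U₀) := by
        simp only [upd, newJ, U₀, z₀]
        congr!
      simp only [hcell, this]
    rw [h0]
    refine le_trans ?_ (Finset.single_le_sum (f := fun z : S → V => ∑ U ∈ Sᶜ.powerset,
      (∏ g, cell m S (newJ I S z) z U g (y g)) * f (newJ I S z, S ∪ U) y)
      (fun z _ => Finset.sum_nonneg fun U _ => nn z U) (Finset.mem_univ z₀))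
    exact Finset.single_le_sum (f := fun U : Finset A =>
      (∏ g, cell m S (newJ I S z₀) z₀ U g (y g)) * f (newJ I S z₀, S ∪ U) y)
      (fun U _ => nn z₀ U) (by simp [U₀])
  refine (Finset.sum_le_sum fun y _ => key y).trans_eq ?_
  rw [Finset.sum_comm]
  refine Finset.sum_congr rfl fun z _ => ?_
  rw [Finset.sum_comm]

lemma prod_cell_mass (m : A → V → ℝ) (S : Finset A) (J : Finset V) (z : S → V) {U : Finset A}
    (hU : U ⊆ Sᶜ) :
    ∏ g, ∑ v, cell m S J z U g v
      = (∏ g : S, m g (z g)) *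
        ((∏ g ∈ U, ∑ v ∈ J, m g v) * ∏ g ∈ Sᶜ \ U, ∑ v ∈ Jᶜ, m g v) := by
  rw [← Finset.prod_mul_prod_compl S, ← Finset.prod_coe_sort S,
    ← Finset.prod_sdiff hU, mul_comm (∏ g ∈ Sᶜ \ U, _)]
  congr 1
  · refine Finset.prod_congr rfl fun g _ => ?_
    simp [cell]
  congr 1
  · refine Finset.prod_congr rfl fun g hg => ?_
    have : g ∉ S := by simpa using hU hg
    simp [cell, this, hg]
  · refine Finset.prod_congr rfl fun g hg => ?_
    simp only [Finset.mem_sdiff, Finset.mem_compl] at hg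
    simp only [cell, hg.1, hg.2, dif_neg, if_false, not_false_eq_true]
    have hJ : Jᶜ = univ.filter (· ∉ J) := by ext; simp
    rw [hJ, Finset.sum_filter]
    refine Finset.sum_congr rfl fun v _ => ?_
    by_cases hv : v ∈ J <;> simp [hv]

/-- Sum over one random-walk step: the agents' weights `ν g` are pushed forward. -/
lemma sum_step (G : SimpleGraph V) (ν : A → V → ℝ) (f : (A → V) → ℝ) :
    ∑ y : A → V, (∏ g, ν g (y g)) * ∑ y' : A → V, (∏ g, nbrW G (y g) (y' g)) * f y'
      = ∑ y' : A → V, (∏ g, ∑ v, ν g v * nbrW G v (y' g)) * f y' := by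
  simp_rw [Finset.mul_sum]
  rw [Finset.sum_comm]
  refine Finset.sum_congr rfl fun y' _ => ?_
  rw [Fintype.prod_sum, Finset.sum_mul]
  refine Finset.sum_congr rfl fun y _ => ?_
  rw [Finset.prod_mul_distrib, mul_assoc]

/-! ### The exponential-moment induction -/

/-- One-agent estimate: an uninformed agent of mass at least `1/2` and density at most `1/N` has
exponential moment at most its mass times `exp (4 x c / N)`, where `c` is the number of informed
vertices. -/
lemma agent_bound {N : ℝ} (hN : 0 < N) {x : ℝ} (hx0 : 0 ≤ x) (hx1 : x ≤ 1) {m : V → ℝ}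
    (hm : ∀ v, m v ≤ 1 / N) (hmass : 1 / 2 ≤ ∑ v, m v) (J : Finset V) {c : ℝ} (hc : J.card ≤ c) :
    Real.exp x * ∑ v ∈ J, m v + ∑ v ∈ Jᶜ, m v ≤ (∑ v, m v) * Real.exp (4 * x * c / N) := by
  have hJ : ∑ v ∈ J, m v ≤ c / N := by
    calc ∑ v ∈ J, m v ≤ ∑ v ∈ J, 1 / N := Finset.sum_le_sum fun v _ => hm v
      _ = J.card / N := by simp [div_eq_mul_inv]
      _ ≤ c / N := by gcongr
  have hc0 : 0 ≤ c := le_trans (by positivity) hc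
  have hsum : ∑ v ∈ Jᶜ, m v = ∑ v, m v - ∑ v ∈ J, m v := by
    rw [← Finset.sum_add_sum_compl J]; ring
  have hexp : Real.exp x - 1 ≤ 2 * x := by
    have := Real.abs_exp_sub_one_le (x := x) (by rwa [abs_of_nonneg hx0])
    rw [abs_of_nonneg hx0] at this
    exact (le_abs_self _).trans this
  have hexp0 : 0 ≤ Real.exp x - 1 := by linarith [Real.add_one_le_exp x]
  have h1 : 4 * x * c / N + 1 ≤ Real.exp (4 * x * c / N) := Real.add_one_le_exp _
  have hcN : 0 ≤ c / N := by positivity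
  have h2 : (Real.exp x - 1) * ∑ v ∈ J, m v ≤ 2 * x * (c / N) :=
    (mul_le_mul_of_nonneg_left hJ hexp0).trans (mul_le_mul_of_nonneg_right hexp hcN)
  calc Real.exp x * ∑ v ∈ J, m v + ∑ v ∈ Jᶜ, m v
      = ∑ v, m v + (Real.exp x - 1) * ∑ v ∈ J, m v := by rw [hsum]; ring
    _ ≤ ∑ v, m v + 2 * x * (c / N) := by linarith
    _ ≤ (∑ v, m v) * (4 * x * c / N + 1) := by
        have : 0 ≤ (∑ v, m v - 1 / 2) * (4 * (x * (c / N))) :=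
          mul_nonneg (by linarith) (by positivity)
        have e : 4 * x * c / N = 4 * (x * (c / N)) := by ring
        rw [e]; linarith
    _ ≤ _ := mul_le_mul_of_nonneg_left h1 (by linarith)

/-- The bound of `main_bound` once at least `B` vertices and agents are informed. -/
lemma trivial_bound {G : SimpleGraph V} (hw : ∀ v, ∑ u, nbrW G v u = 1)
    {C B x₀ : ℝ} (hC1 : 1 ≤ C) (hx₀ : 0 ≤ x₀) (r : ℕ) (I : Finset V) (S : Finset A)
    (μ : A → V → ℝ) (hμ0 : ∀ g v, 0 ≤ μ g v) (hB : B ≤ I.card + S.card) :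
    ∑ y : A → V, (∏ g, μ g (y g)) * hitP G r (I, S) y
      ≤ (∏ g, ∑ v, μ g v) * Real.exp (x₀ * C ^ r * (I.card + S.card) - x₀ * B) := by
  have hmass0 : 0 ≤ ∏ g, ∑ v, μ g v :=
    Finset.prod_nonneg fun g _ => Finset.sum_nonneg fun v _ => hμ0 g v
  calc ∑ y : A → V, (∏ g, μ g (y g)) * hitP G r (I, S) y
      ≤ ∑ y : A → V, ∏ g, μ g (y g) := Finset.sum_le_sum fun y _ =>
        mul_le_of_le_one_right (Finset.prod_nonneg fun g _ => hμ0 _ _) (hitP_le_one hw _ _ _)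
    _ = ∏ g, ∑ v, μ g v := (Fintype.prod_sum _).symm
    _ ≤ _ := by
      refine le_mul_of_one_le_right hmass0 (Real.one_le_exp ?_)
      have h1 : (1 : ℝ) ≤ C ^ r := one_le_pow₀ hC1
      have h2 : x₀ * B ≤ x₀ * (I.card + S.card) := mul_le_mul_of_nonneg_left hB hx₀
      have h3 : x₀ * (I.card + S.card) * 1 ≤ x₀ * (I.card + S.card) * C ^ r :=
        mul_le_mul_of_nonneg_left h1 (by positivity)
      linarith

/-- The exponential-moment bound, by induction on the number `r` of remaining steps. The agents
are independent with unnormalised position weights `μ g`; the uninformed ones have density at most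
`1/N` and have lost little mass, the loss being the probability of having avoided the informed
vertices. Once `B` vertices and agents are informed the bound is trivial. -/
lemma main_bound {G : SimpleGraph V} {d : ℕ} (hG : G.IsRegularOfDegree d) (hd : 0 < d)
    {N α B x₀ : ℝ} (hN : N = Fintype.card V) (hN0 : 0 < N) (hα : 0 < α)
    (hA : (Fintype.card A : ℝ) ≤ α * N) (hBN : B ≤ N) (hx₀ : 0 ≤ x₀) (r : ℕ)
    (hr : x₀ * (2 + 4 * α) ^ r ≤ 1) (I : Finset V) (S : Finset A) (μ : A → V → ℝ)
    (hμ0 : ∀ g v, 0 ≤ μ g v) (hμ1 : ∀ g, g ∉ S → ∀ v, μ g v ≤ 1 / N)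
    (hμ2 : ∀ g, g ∉ S → 1 / 2 + r * B / N ≤ ∑ v, μ g v) :
    ∑ y : A → V, (∏ g, μ g (y g)) * hitP G r (I, S) y
      ≤ (∏ g, ∑ v, μ g v)
        * Real.exp (x₀ * (2 + 4 * α) ^ r * (I.card + S.card) - x₀ * B) := by
  have hw := sum_nbrW hG hd
  have hC1 : (1 : ℝ) ≤ 2 + 4 * α := by linarith
  induction r generalizing I S μ with
  | zero =>
    by_cases hB : B ≤ I.card + S.card
    · exact trivial_bound hw hC1 hx₀ 0 I S μ hμ0 hB
    · push Not at hB
      refine le_trans (le_of_eq ?_) (mul_nonneg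
        (Finset.prod_nonneg fun g _ => Finset.sum_nonneg fun v _ => hμ0 g v) (Real.exp_pos _).le)
      refine Finset.sum_eq_zero fun y _ => ?_
      rw [hitP, if_neg, mul_zero]
      intro h
      have h1 := card_newJ I S (fun g => y g)
      have h2 : newJ I S (fun g => y g) = univ := h
      rw [h2, Finset.card_univ] at h1
      have h3 : (Fintype.card V : ℝ) ≤ I.card + S.card := by exact_mod_cast h1
      linarith
  | succ r ih =>
    by_cases hB : B ≤ I.card + S.card
    · exact trivial_bound hw hC1 hx₀ (r + 1) I S μ hμ0 hB
    push Not at hB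
    set x : ℝ := x₀ * (2 + 4 * α) ^ r with hx
    have hx0 : 0 ≤ x := by positivity
    have hxs : x₀ * (2 + 4 * α) ^ (r + 1) = (2 + 4 * α) * x := by rw [hx]; ring
    have hx1 : x ≤ 1 := by
      rw [hxs] at hr
      nlinarith
    set q : ℝ := I.card + S.card with hq
    have hq0 : 0 ≤ q := by positivity
    have hJq : ∀ z : S → V, ((newJ I S z).card : ℝ) ≤ q := fun z => by
      rw [hq]; exact_mod_cast card_newJ I S z
    -- the estimate for a fixed outcome `z`, `U` of the current update
    have hcell : ∀ (z : S → V), ∀ U ∈ Sᶜ.powerset,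
        ∑ y : A → V, (∏ g, cell μ S (newJ I S z) z U g (y g)) *
            ∑ y' : A → V, (∏ g, nbrW G (y g) (y' g)) * hitP G r (newJ I S z, S ∪ U) y'
          ≤ (∏ g, ∑ v, cell μ S (newJ I S z) z U g v)
            * Real.exp (x * ((newJ I S z).card + (S.card + U.card)) - x₀ * B) := by
      intro z U hU
      rw [Finset.mem_powerset] at hU
      rw [sum_step]
      set ν := cell μ S (newJ I S z) z U with hν
      have hν0 : ∀ g v, 0 ≤ ν g v := cell_nonneg hμ0 _ _ _ _
      have hmass : ∀ g, ∑ u, ∑ v, ν g v * nbrW G v u = ∑ v, ν g v := by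
        intro g
        rw [Finset.sum_comm]
        simp_rw [← Finset.mul_sum, hw, mul_one]
      have hcard : ((S ∪ U).card : ℝ) = S.card + U.card := by
        rw [Finset.card_union_of_disjoint]
        · push_cast; rfl
        · exact disjoint_compl_right.mono_right hU
      have hνe : ∀ g, g ∉ S ∪ U → ∀ v, ν g v = if v ∈ newJ I S z then 0 else μ g v := by
        intro g hg v
        simp only [Finset.mem_union, not_or] at hg
        simp [hν, cell, hg.1, hg.2]
      have := ih (by rw [hx] at hx1; exact hx1) (newJ I S z) (S ∪ U)
        (fun g u => ∑ v, ν g v * nbrW G v u)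
        (fun g u => Finset.sum_nonneg fun v _ => mul_nonneg (hν0 g v) (nbrW_nonneg G v u))
        ?_ ?_
      · simp only [hmass, hcard] at this
        exact this
      · -- the density bound survives a step because `G` is regular
        intro g hg u
        have hgS : g ∉ S := fun h => hg (Finset.mem_union_left _ h)
        calc ∑ v, ν g v * nbrW G v u ≤ ∑ v, 1 / N * nbrW G v u := by
              refine Finset.sum_le_sum fun v _ =>
                mul_le_mul_of_nonneg_right ?_ (nbrW_nonneg G v u)
              rw [hνe g hg]
              split_ifs
              · positivity
              · exact hμ1 g hgS v
          _ = 1 / N := by rw [← Finset.mul_sum, sum_nbrW_left hG hd, mul_one]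
      · -- avoiding the informed vertices costs mass at most `B / N`
        intro g hg
        have hgS : g ∉ S := fun h => hg (Finset.mem_union_left _ h)
        rw [hmass]
        have h1 : ∑ v, μ g v ≤ ∑ v, ν g v + (newJ I S z).card * (1 / N) := by
          have : ∑ v, (if v ∈ newJ I S z then 1 / N else 0)
              = ((newJ I S z).card : ℝ) * (1 / N) := by simp
          rw [← this, ← Finset.sum_add_distrib]
          refine Finset.sum_le_sum fun v _ => ?_
          rw [hνe g hg]
          split_ifs
          · simpa using hμ1 g hgS v
          · simp
        have h2 := hμ2 g hgS
        have h3 : ((newJ I S z).card : ℝ) * (1 / N) ≤ B * (1 / N) :=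
          mul_le_mul_of_nonneg_right ((hJq z).trans hB.le) (by positivity)
        have h4 : ((r + 1 : ℕ) : ℝ) * B / N = r * B / N + B * (1 / N) := by push_cast; ring
        linarith
    have hz : ∀ z : S → V, ∑ U ∈ Sᶜ.powerset, (∏ g, ∑ v, cell μ S (newJ I S z) z U g v)
          * Real.exp (x * ((newJ I S z).card + (S.card + U.card)) - x₀ * B)
        ≤ (∏ g : S, μ g (z g)) * ((∏ g ∈ Sᶜ, ∑ v, μ g v)
          * Real.exp ((2 + 4 * α) * x * q - x₀ * B)) := by
      intro z
      set J := newJ I S z with hJ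
      have e : ∀ U ∈ Sᶜ.powerset, (∏ g, ∑ v, cell μ S J z U g v)
            * Real.exp (x * (J.card + (S.card + U.card)) - x₀ * B)
          = ((∏ g : S, μ g (z g)) * Real.exp (x * (J.card + S.card) - x₀ * B)) *
            ((∏ g ∈ U, Real.exp x * ∑ v ∈ J, μ g v) * ∏ g ∈ Sᶜ \ U, ∑ v ∈ Jᶜ, μ g v) := by
        intro U hU
        rw [prod_cell_mass _ _ _ _ (Finset.mem_powerset.mp hU), Finset.prod_mul_distrib,
          Finset.prod_const, ← Real.exp_nat_mul]
        have : x * (J.card + (S.card + U.card)) - x₀ * B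
            = (x * (J.card + S.card) - x₀ * B) + U.card * x := by ring
        rw [this, Real.exp_add]
        ring
      rw [Finset.sum_congr rfl e, ← Finset.mul_sum, ← Finset.prod_add, mul_assoc]
      refine mul_le_mul_of_nonneg_left ?_ (Finset.prod_nonneg fun g _ => hμ0 _ _)
      have hM0 : 0 ≤ ∏ g ∈ Sᶜ, ∑ v, μ g v :=
        Finset.prod_nonneg fun g _ => Finset.sum_nonneg fun v _ => hμ0 g v
      have h1 : ∏ g ∈ Sᶜ, (Real.exp x * ∑ v ∈ J, μ g v + ∑ v ∈ Jᶜ, μ g v)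
          ≤ (∏ g ∈ Sᶜ, ∑ v, μ g v) * Real.exp (4 * α * x * q) := by
        calc _ ≤ ∏ g ∈ Sᶜ, ((∑ v, μ g v) * Real.exp (4 * x * q / N)) := by
              refine Finset.prod_le_prod (fun g _ => ?_) fun g hg => ?_
              · exact add_nonneg (mul_nonneg (Real.exp_pos _).le
                  (Finset.sum_nonneg fun v _ => hμ0 g v)) (Finset.sum_nonneg fun v _ => hμ0 g v)
              · have hgS : g ∉ S := by simpa using hg
                refine agent_bound hN0 hx0 hx1 (hμ1 g hgS) ?_ J (hJq z)
                refine le_trans ?_ (hμ2 g hgS)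
                have : 0 ≤ ((r + 1 : ℕ) : ℝ) * B / N := by
                  have : 0 ≤ B := hq0.trans hB.le
                  positivity
                linarith
          _ = (∏ g ∈ Sᶜ, ∑ v, μ g v) * Real.exp ((Sᶜ).card * (4 * x * q / N)) := by
              rw [Finset.prod_mul_distrib, Finset.prod_const, ← Real.exp_nat_mul]
          _ ≤ _ := by
              refine mul_le_mul_of_nonneg_left (Real.exp_le_exp.mpr ?_) hM0
              have h2 : ((Sᶜ).card : ℝ) ≤ α * N := by
                refine le_trans ?_ hA
                exact_mod_cast Finset.card_le_univ _
              calc ((Sᶜ).card : ℝ) * (4 * x * q / N) ≤ α * N * (4 * x * q / N) :=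
                    mul_le_mul_of_nonneg_right h2 (by positivity)
                _ = 4 * α * x * q := by field_simp
      calc _ ≤ Real.exp (2 * x * q - x₀ * B)
            * ((∏ g ∈ Sᶜ, ∑ v, μ g v) * Real.exp (4 * α * x * q)) := by
            refine mul_le_mul (Real.exp_le_exp.mpr ?_) h1 ?_ (Real.exp_pos _).le
            · have h3 : (S.card : ℝ) ≤ q := by
                rw [hq]; exact le_add_of_nonneg_left (by positivity)
              have h4 := mul_le_mul_of_nonneg_left (add_le_add (hJq z) h3) hx0
              linarith
            · exact Finset.prod_nonneg fun g _ => add_nonneg (mul_nonneg (Real.exp_pos _).le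
                (Finset.sum_nonneg fun v _ => hμ0 g v)) (Finset.sum_nonneg fun v _ => hμ0 g v)
        _ = _ := by
            have : (2 + 4 * α) * x * q - x₀ * B = (2 * x * q - x₀ * B) + 4 * α * x * q := by ring
            rw [this, Real.exp_add]
            ring
    have h0 := sum_le_cells hμ0 I S
      (fun p y => ∑ y' : A → V, (∏ g, nbrW G (y g) (y' g)) * hitP G r p y')
      (fun p y => Finset.sum_nonneg fun y' _ =>
        mul_nonneg (Finset.prod_nonneg fun g _ => nbrW_nonneg G _ _) (hitP_nonneg _ _ _ _))
    refine h0.trans ?_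
    refine (Finset.sum_le_sum fun z _ =>
      (Finset.sum_le_sum fun U hU => hcell z U hU).trans (hz z)).trans_eq ?_
    rw [← Finset.sum_mul, ← Fintype.prod_sum (fun (g : S) v => μ g v), ← mul_assoc, hxs,
      ← Finset.prod_mul_prod_compl S, ← Finset.prod_coe_sort S]

/-- The bound of `main_bound` for the actual process, with `x₀ = C ^ (-k)` and
`B = n / (2 (k + 1))`. -/
lemma vxProbLe_bound {G : SimpleGraph V} {d : ℕ} (hG : G.IsRegularOfDegree d) (hd : 0 < d)
    {α : ℝ} (hα : 0 < α) (s : V) (a k : ℕ) (ha : (a : ℝ) ≤ α * Fintype.card V) :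
    vxProbLe G s a k
      ≤ Real.exp (1 - (Fintype.card V : ℝ) / (2 * ((2 + 4 * α) ^ k) ^ 2)) := by
  set C : ℝ := 2 + 4 * α with hC
  set N : ℝ := (Fintype.card V : ℝ) with hN
  have hN0 : 0 < N := by
    have : 0 < Fintype.card V := Fintype.card_pos_iff.mpr ⟨s⟩
    rw [hN]; exact_mod_cast this
  have hd0 : (0 : ℝ) < d := by exact_mod_cast hd
  have hC0 : 0 < C ^ k := by positivity
  have hw := sum_nbrW hG hd
  have hstat : ∀ v, statW G v = 1 / N := by
    intro v
    simp only [statW, hG.degree_eq, Finset.sum_const, Finset.card_univ, nsmul_eq_mul, ← hN]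
    field_simp
  unfold vxProbLe
  rw [vxProb_eq hw]
  simp only [hstat]
  have hx : (C ^ k)⁻¹ * (2 + 4 * α) ^ k = 1 := by rw [← hC]; exact inv_mul_cancel₀ hC0.ne'
  have hmass : ∑ _v : V, 1 / N = 1 := by
    rw [Finset.sum_const, Finset.card_univ, nsmul_eq_mul, ← hN]; field_simp
  have := main_bound (A := Fin a) hG hd (N := N) (α := α) (B := N / (2 * (k + 1)))
    (x₀ := (C ^ k)⁻¹) hN hN0 hα (by simpa using ha)
    (div_le_self hN0.le (by have : (0 : ℝ) ≤ k := by positivity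
                            linarith))
    (by positivity) k hx.le {s} ∅ (fun _ _ => 1 / N) (fun _ _ => by positivity)
    (fun _ _ _ => le_rfl) ?_
  · refine this.trans ?_
    rw [hx, hmass, Finset.prod_const_one, one_mul]
    refine Real.exp_le_exp.mpr ?_
    have hk : (k : ℝ) + 1 ≤ C ^ k := by
      have h1 : (k : ℝ) + 1 ≤ 2 ^ k := by exact_mod_cast Nat.lt_two_pow_self
      exact h1.trans (pow_le_pow_left₀ (by norm_num) (by linarith) k)
    have h2 : N / (2 * (C ^ k) ^ 2) ≤ (C ^ k)⁻¹ * (N / (2 * (k + 1))) := by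
      have e : N / (2 * (C ^ k) ^ 2) = (C ^ k)⁻¹ * (N / (2 * C ^ k)) := by field_simp
      rw [e]
      gcongr
    simp only [Finset.card_singleton, Finset.card_empty, Nat.cast_one, Nat.cast_zero]
    linarith
  · intro _ _
    rw [hmass]
    have : (k : ℝ) * (N / (2 * (k + 1))) / N = 1 / 2 * (k / (k + 1)) := by field_simp
    have h2 : (k : ℝ) / (k + 1) ≤ 1 := by
      rw [div_le_one (by positivity)]; linarith
    linarith

end Rumor

/-- For any constants `ε, α, λ > 0` there are `κ > 0` and `n₀` such
that for all `n ≥ n₀`, every connected `d`-regular graph `G` on `n` vertices with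
`d ≥ ε log n`, every source `s` and every number of agents `|A| ≤ α n`,
`P[T_visitx(G,s) ≥ κ log n] ≥ 1 − n^{−λ}` (note `T ≥ κ log n ↔ ¬(T ≤ ⌈κ log n⌉ − 1)`
for the integer-valued broadcast time `T`). -/
theorem visitx_log_lower (ε α lam : ℝ) (hε : 0 < ε) (hα : 0 < α) (hlam : 0 < lam) :
    ∃ κ : ℝ, 0 < κ ∧ ∃ n₀ : ℕ,
      ∀ (V : Type) [Fintype V] (G : SimpleGraph V) (n d : ℕ),
        n₀ ≤ n → n = Fintype.card V → G.Connected → G.IsRegularOfDegree d →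
        ε * Real.log n ≤ (d : ℝ) →
        ∀ (s : V) (a : ℕ), (a : ℝ) ≤ α * n →
          1 - (n : ℝ) ^ (-lam)
            ≤ 1 - Rumor.vxProbLe G s a (⌈κ * Real.log n⌉₊ - 1) := by
  have hC : (1 : ℝ) < 2 + 4 * α := by linarith
  have hlogC : 0 < Real.log (2 + 4 * α) := Real.log_pos hC
  have hlim : ∀ᶠ n : ℕ in Filter.atTop,
      1 + lam * Real.log n ≤ (n : ℝ) ^ (1 / 2 : ℝ) / 2 := by
    have h1 : (fun t : ℝ => 1 + lam * Real.log t) =o[Filter.atTop]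
        fun t : ℝ => t ^ (1 / 2 : ℝ) := by
      refine Asymptotics.IsLittleO.add ?_ ?_
      · refine Asymptotics.isLittleO_const_left.mpr (Or.inr ?_)
        exact tendsto_norm_atTop_atTop.comp (tendsto_rpow_atTop (by norm_num))
      · exact (isLittleO_log_rpow_atTop (by norm_num)).const_mul_left lam
    have h2 := (h1.bound (c := 1 / 2) (by norm_num)).natCast_atTop
    filter_upwards [h2] with n hn
    have h3 : (0 : ℝ) ≤ (n : ℝ) ^ (1 / 2 : ℝ) := by positivity
    rw [Real.norm_of_nonneg h3] at hn
    exact (Real.le_norm_self _).trans (hn.trans_eq (by ring))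
  obtain ⟨n₀, hn₀⟩ := Filter.eventually_atTop.mp hlim
  -- this `κ` makes `C ^ (2 κ log n) = n ^ (1/2)` for `C = 2 + 4 α`
  refine ⟨1 / (4 * Real.log (2 + 4 * α)), by positivity, max n₀ 2, ?_⟩
  intro V _ G n d hn hcard _ hG hd s a ha
  have hn2 : 2 ≤ n := (le_max_right _ _).trans hn
  have hnR : (0 : ℝ) < n := by positivity
  have hlog : 0 < Real.log n := Real.log_pos (by exact_mod_cast hn2)
  have hd0 : 0 < d := by
    have : (0 : ℝ) < d := lt_of_lt_of_le (by positivity) hd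
    exact_mod_cast this
  set κ : ℝ := 1 / (4 * Real.log (2 + 4 * α)) with hκ
  set k : ℕ := ⌈κ * Real.log n⌉₊ - 1 with hk
  have hkle : (k : ℝ) ≤ κ * Real.log n := by
    have h1 : 0 < κ * Real.log n := by positivity
    have h2 := Nat.ceil_lt_add_one h1.le
    have h3 : 1 ≤ ⌈κ * Real.log n⌉₊ := Nat.one_le_ceil_iff.mpr h1
    rw [hk, Nat.cast_sub h3]
    push_cast
    linarith
  have hpow : ((2 + 4 * α) ^ k) ^ 2 ≤ (n : ℝ) ^ (1 / 2 : ℝ) := by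
    rw [← pow_mul, ← Real.rpow_natCast, Real.rpow_def_of_pos (by linarith),
      Real.rpow_def_of_pos hnR]
    refine Real.exp_le_exp.mpr ?_
    have h1 := mul_le_mul_of_nonneg_left hkle hlogC.le
    have h2 : Real.log (2 + 4 * α) * (κ * Real.log n) = Real.log n / 4 := by
      rw [hκ]; field_simp
    push_cast
    linarith
  have hb := Rumor.vxProbLe_bound hG hd0 hα s a k (by rw [← hcard]; exact ha)
  rw [← hcard] at hb
  have hfin : Rumor.vxProbLe G s a k ≤ (n : ℝ) ^ (-lam) := by
    refine hb.trans ?_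
    rw [Real.rpow_def_of_pos hnR]
    refine Real.exp_le_exp.mpr ?_
    have h1 := hn₀ n ((le_max_left _ _).trans hn)
    have h2 : (n : ℝ) ^ (1 / 2 : ℝ) / 2 ≤ n / (2 * ((2 + 4 * α) ^ k) ^ 2) := by
      rw [le_div_iff₀ (by positivity)]
      have h3 : (n : ℝ) ^ (1 / 2 : ℝ) * (n : ℝ) ^ (1 / 2 : ℝ) = n := by
        rw [← Real.rpow_add hnR]; norm_num
      have h4 := mul_le_mul_of_nonneg_left hpow (by positivity : 0 ≤ (n : ℝ) ^ (1 / 2 : ℝ))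
      linarith
    linarith
  linarith
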